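/- Let L be a finite-dimensional Lie algebra over an algebraically closed field F of characteristic zero. Then L is supersolvable if and only if every maximal subalgebra M of L has a maximal completion C (a maximal element of I(M) under inclusion) with dim C − dim k(C) = 1. -/

import Mathlib

/-- The strict core `k(B)` of a subalgebra `B` of `L`: the sum of all ideals of `L` that are
proper subalgebras of `B`. -/
def strictCore {F L : Type*} [Field F] [LieRing L] [LieAlgebra F L]
    (B : LieSubalgebra F L) : LieIdeal F L :=
  sSup {I : LieIdeal F L | (I : LieSubalgebra F L) < B}

/-- `C` is a completion of the maximal subalgebra `M` of `L` if `C` is not contained in `M`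
but every proper subalgebra of `C` that is an ideal of `L` is contained in `M`.
The set of completions of `M` is the index complex `I(M)`. -/
def IsCompletion {F L : Type*} [Field F] [LieRing L] [LieAlgebra F L]
    (M C : LieSubalgebra F L) : Prop :=
  ¬ C ≤ M ∧ ∀ I : LieIdeal F L, (I : LieSubalgebra F L) < C → (I : LieSubalgebra F L) ≤ M

/-- A maximal completion of `M`: a maximal element of the index complex `I(M)` under inclusion. -/
def IsMaxCompletion {F L : Type*} [Field F] [LieRing L] [LieAlgebra F L]
    (M C : LieSubalgebra F L) : Prop :=
  IsCompletion M C ∧ ∀ D : LieSubalgebra F L, IsCompletion M D → C ≤ D → C = D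

/-- The quotient of a subalgebra `C` of `L` by (the pullback along the inclusion of) an ideal
`K` of `L`. -/
abbrev quotIn {F L : Type*} [Field F] [LieRing L] [LieAlgebra F L]
    (C : LieSubalgebra F L) (K : LieIdeal F L) : Type _ :=
  C ⧸ LieIdeal.comap C.incl K

/-- The quotient Lie algebra `C / k(C)`. -/
abbrev quotCore {F L : Type*} [Field F] [LieRing L] [LieAlgebra F L]
    (C : LieSubalgebra F L) : Type _ :=
  quotIn C (strictCore C)

/-- The largest ideal of `L` contained in the subalgebra `B`, denoted `B_L`. -/
def idealCore {F L : Type*} [Field F] [LieRing L] [LieAlgebra F L]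
    (B : LieSubalgebra F L) : LieIdeal F L :=
  sSup {I : LieIdeal F L | (I : LieSubalgebra F L) ≤ B}

/-- A subalgebra `B` of `L` is a c-ideal of `L` if there is an ideal `C` of `L` such that
`L = B + C` and `B ∩ C ≤ B_L`. -/
def IsCIdeal {F L : Type*} [Field F] [LieRing L] [LieAlgebra F L]
    (B : LieSubalgebra F L) : Prop :=
  ∃ C : LieIdeal F L, B ⊔ (C : LieSubalgebra F L) = ⊤ ∧
    B ⊓ (C : LieSubalgebra F L) ≤ (idealCore B : LieSubalgebra F L)

/-- A Lie algebra is supersolvable if it has a chain of ideals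
`0 = I_0 ⊆ I_1 ⊆ ... ⊆ I_n = L` with `dim I_j = j` for each `j`. -/
def IsSupersolvableLieAlgebra (F L : Type*) [Field F] [LieRing L] [LieAlgebra F L] : Prop :=
  ∃ (n : ℕ) (I : Fin (n + 1) → LieIdeal F L), I 0 = ⊥ ∧ I (Fin.last n) = ⊤ ∧
    Monotone I ∧ ∀ j : Fin (n + 1), Module.finrank F (I j) = (j : ℕ)

/-- The natural quotient map `L → L ⧸ B` as a morphism of Lie algebras. -/
def lieQuotMk {F L : Type*} [Field F] [LieRing L] [LieAlgebra F L] (B : LieIdeal F L) :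
    L →ₗ⁅F⁆ L ⧸ B :=
  { (LieSubmodule.Quotient.mk' B).toLinearMap with
    map_lie' := rfl }

/-- A subalgebra `C` of `L` is a subideal of `L` if there is a chain of subalgebras
`C = C_0 ⊆ C_1 ⊆ ... ⊆ C_n = L` in which each `C_i` is an ideal of `C_{i+1}`. -/
def IsSubideal {F L : Type*} [Field F] [LieRing L] [LieAlgebra F L]
    (C : LieSubalgebra F L) : Prop :=
  ∃ (n : ℕ) (f : Fin (n + 1) → LieSubalgebra F L), f 0 = C ∧ f (Fin.last n) = ⊤ ∧
    ∀ i : Fin n, f i.castSucc ≤ f i.succ ∧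
      ∀ x ∈ f i.succ, ∀ y ∈ f i.castSucc, ⁅x, y⁆ ∈ f i.castSucc

/-- The Frattini subalgebra: the intersection of all maximal subalgebras of `L`. -/
def frattiniSubalgebra (F L : Type*) [Field F] [LieRing L] [LieAlgebra F L] :
    LieSubalgebra F L :=
  sInf {M : LieSubalgebra F L | IsCoatom M}

/-- The Frattini ideal: the largest ideal of `L` contained in the Frattini subalgebra. -/
def frattiniIdeal (F L : Type*) [Field F] [LieRing L] [LieAlgebra F L] : LieIdeal F L :=
  idealCore (frattiniSubalgebra F L)

section

variable {F L : Type*} [Field F] [LieRing L] [LieAlgebra F L]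

open LieAlgebra

theorem strictCore_le (B : LieSubalgebra F L) : (strictCore B : LieSubalgebra F L) ≤ B := by
  rw [← LieSubalgebra.toSubmodule_le_toSubmodule, LieIdeal.toLieSubalgebra_toSubmodule,
    strictCore, LieSubmodule.sSup_toSubmodule_eq_iSup]
  exact iSup₂_le fun I hI ↦ hI.le

theorem IsCompletion.strictCore_le_left {M C : LieSubalgebra F L} (h : IsCompletion M C) :
    (strictCore C : LieSubalgebra F L) ≤ M := by
  rw [← LieSubalgebra.toSubmodule_le_toSubmodule, LieIdeal.toLieSubalgebra_toSubmodule,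
    strictCore, LieSubmodule.sSup_toSubmodule_eq_iSup]
  exact iSup₂_le fun I hI ↦ h.2 I hI

theorem le_strictCore {B : LieSubalgebra F L} {I : LieIdeal F L}
    (h : (I : LieSubalgebra F L) < B) : I ≤ strictCore B :=
  le_sSup h

theorem IsCompletion.isMaxCompletion_of_lieIdeal {M : LieSubalgebra F L} {I : LieIdeal F L}
    (h : IsCompletion M (I : LieSubalgebra F L)) :
    IsMaxCompletion M (I : LieSubalgebra F L) :=
  ⟨h, fun _ hD hle ↦ by_contra fun hne ↦ h.1 (hD.2 I (lt_of_le_of_ne hle hne))⟩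

theorem exists_lieIdeal_isCompletion [FiniteDimensional F L] {M : LieSubalgebra F L}
    (hM : M ≠ ⊤) : ∃ I : LieIdeal F L, IsCompletion M (I : LieSubalgebra F L) := by
  have := LieSubmodule.wellFoundedLT_of_isArtinian F L L
  obtain ⟨I, hI, hmin⟩ := (wellFounded_lt (α := LieIdeal F L)).has_min
    {I | ¬ (I : LieSubalgebra F L) ≤ M} ⟨⊤, fun h ↦ hM (top_le_iff.mp fun x _ ↦ h trivial)⟩
  exact ⟨I, hI, fun J hJ ↦ by_contra fun hJM ↦ hmin J hJM hJ⟩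

/-- In a supersolvable Lie algebra the strict core of an ideal has codimension at most one. -/
theorem IsSupersolvableLieAlgebra.finrank_le_finrank_strictCore_add_one [FiniteDimensional F L]
    (h : IsSupersolvableLieAlgebra F L) (C : LieIdeal F L) (hC : ¬ C ≤ strictCore (F := F) C) :
    Module.finrank F C ≤ Module.finrank F (strictCore (C : LieSubalgebra F L)) + 1 := by
  obtain ⟨n, I, h0, hn, hmono, hrank⟩ := h
  obtain ⟨j, hj⟩ : ∃ j : Fin n, C ⊓ I j.castSucc ≤ strictCore (F := F) C ∧
      ¬ C ⊓ I j.succ ≤ strictCore (F := F) C := by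
    by_contra! hcon
    have key : ∀ j : Fin (n + 1), C ⊓ I j ≤ strictCore (F := F) C := fun j ↦
      Fin.induction (by simp [h0]) hcon j
    exact hC (by simpa [hn] using key (Fin.last n))
  have hCj : C ≤ I j.succ := by
    by_contra hnot
    exact hj.2 (le_strictCore (lt_of_le_of_ne (inf_le_left : C ⊓ I j.succ ≤ C)
      fun he ↦ hnot (inf_eq_left.mp
        (LieSubmodule.toSubmodule_injective (congrArg LieSubalgebra.toSubmodule he)))))
  have hsup : Module.finrank F ↥(C.toSubmodule ⊔ (I j.castSucc).toSubmodule) ≤ j + 1 := by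
    have := Submodule.finrank_mono (sup_le ((LieSubmodule.toSubmodule_le_toSubmodule _ _).mpr hCj)
      ((LieSubmodule.toSubmodule_le_toSubmodule _ _).mpr (hmono j.castSucc_le_succ)))
    exact this.trans_eq (hrank j.succ)
  have hinf : Module.finrank F ↥(C.toSubmodule ⊓ (I j.castSucc).toSubmodule) ≤
      Module.finrank F (strictCore (C : LieSubalgebra F L)) :=
    Submodule.finrank_mono ((LieSubmodule.toSubmodule_le_toSubmodule _ _).mpr hj.1)
  have hI : Module.finrank F (I j.castSucc).toSubmodule = j := hrank j.castSucc
  have := Submodule.finrank_sup_add_finrank_inf_eq C.toSubmodule (I j.castSucc).toSubmodule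
  change Module.finrank F C.toSubmodule ≤ _
  omega

theorem IsSupersolvableLieAlgebra.exists_isMaxCompletion [FiniteDimensional F L]
    (h : IsSupersolvableLieAlgebra F L) {M : LieSubalgebra F L} (hM : IsCoatom M) :
    ∃ C : LieSubalgebra F L, IsMaxCompletion M C ∧
      Module.finrank F C - Module.finrank F (strictCore C) = 1 := by
  obtain ⟨C, hC⟩ := exists_lieIdeal_isCompletion hM.1
  refine ⟨C, hC.isMaxCompletion_of_lieIdeal, ?_⟩
  have hnot : ¬ C ≤ strictCore (F := F) C := fun hle ↦
    hC.1 fun x hx ↦ hC.strictCore_le_left (hle hx)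
  have hle := h.finrank_le_finrank_strictCore_add_one C hnot
  have hlt : Module.finrank F (strictCore (C : LieSubalgebra F L)).toSubmodule <
      Module.finrank F C.toSubmodule :=
    Submodule.finrank_lt_finrank_of_lt
      (lt_of_le_not_ge (strictCore_le (C : LieSubalgebra F L)) hnot)
  change Module.finrank F (strictCore (C : LieSubalgebra F L)) < Module.finrank F C at hlt
  change Module.finrank F C - _ = 1
  omega

/-- In a solvable Lie algebra over an algebraically closed field of characteristic zero, every
proper ideal has codimension one in a larger ideal. -/
theorem exists_lieIdeal_finrank_eq_add_one [IsAlgClosed F] [CharZero F] [FiniteDimensional F L]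
    [IsSolvable L] (I : LieIdeal F L) (hI : I ≠ ⊤) :
    ∃ J : LieIdeal F L, I ≤ J ∧ Module.finrank F J = Module.finrank F I + 1 := by
  have : Nontrivial (L ⧸ I) := Submodule.Quotient.nontrivial_iff.mpr
    (by rwa [ne_eq, LieSubmodule.toSubmodule_eq_top])
  have : FiniteDimensional F (L ⧸ I) :=
    inferInstanceAs (FiniteDimensional F (L ⧸ I.toSubmodule))
  obtain ⟨χ, hχ⟩ := LieModule.exists_nontrivial_weightSpace_of_isSolvable F L (L ⧸ I)
  obtain ⟨⟨w, hw⟩, hw0⟩ := exists_ne (0 : LieModule.weightSpace (L ⧸ I) χ)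
  rw [LieModule.mem_weightSpace] at hw
  obtain ⟨v, rfl⟩ := LieSubmodule.Quotient.surjective_mk' I w
  have hv : v ∉ I := fun hv ↦ hw0 (Subtype.ext ((LieSubmodule.Quotient.mk_eq_zero I).mpr hv))
  have hxv : ∀ x, ⁅x, v⁆ - χ x • v ∈ I := fun x ↦ by
    rw [← LieSubmodule.Quotient.mk_eq_zero, map_sub, map_smul, LieModuleHom.map_lie, hw x, sub_self]
  refine ⟨{ I.toSubmodule ⊔ F ∙ v with lie_mem := ?_ }, fun x hx ↦
    Submodule.mem_sup_left (S := I.toSubmodule) hx, ?_⟩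
  · intro x m hm
    obtain ⟨a, ha, b, hb, rfl⟩ := Submodule.mem_sup.mp hm
    obtain ⟨r, rfl⟩ := Submodule.mem_span_singleton.mp hb
    refine Submodule.mem_sup.mpr ⟨⁅x, a⁆ + r • (⁅x, v⁆ - χ x • v),
      add_mem (I.lie_mem ha) (I.smul_mem r (hxv x)), r • χ x • v,
      Submodule.smul_mem _ _ (Submodule.smul_mem _ _ (Submodule.mem_span_singleton_self v)), ?_⟩
    rw [lie_add, lie_smul, smul_sub]; abel
  · exact Submodule.finrank_sup_span_singleton hv

theorem isSupersolvableLieAlgebra_of_isSolvable [IsAlgClosed F] [CharZero F]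
    [FiniteDimensional F L] [IsSolvable L] : IsSupersolvableLieAlgebra F L := by
  have key : ∀ I : LieIdeal F L, ∃ J : LieIdeal F L, I ≤ J ∧
      (I ≠ ⊤ → Module.finrank F J = Module.finrank F I + 1) := fun I ↦ by
    by_cases hI : I = ⊤
    · exact ⟨I, le_rfl, fun h ↦ absurd hI h⟩
    · obtain ⟨J, h, h'⟩ := exists_lieIdeal_finrank_eq_add_one I hI
      exact ⟨J, h, fun _ ↦ h'⟩
  choose g hle hg using key
  have hrank : ∀ k ≤ Module.finrank F L, Module.finrank F (g^[k] ⊥) = k := fun k ↦ by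
    induction k with
    | zero => intro _; exact finrank_bot F L
    | succ k ih =>
      intro hk
      rw [Function.iterate_succ_apply', hg, ih (by omega)]
      intro htop
      have := ih (by omega)
      rw [htop] at this
      have h' : Module.finrank F (⊤ : LieIdeal F L) = Module.finrank F L := finrank_top F L
      omega
  refine ⟨Module.finrank F L, fun j ↦ g^[j] ⊥, rfl, ?_, ?_, fun j ↦ hrank j (by omega)⟩
  · rw [← LieSubmodule.toSubmodule_eq_top]
    exact Submodule.eq_top_of_finrank_eq (hrank _ (by simp))
  · intro i j hij
    exact monotone_nat_of_le_succ (f := fun k ↦ g^[k] ⊥)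
      (fun k ↦ by rw [Function.iterate_succ_apply']; exact hle _) hij

theorem isSolvable_comap_of_isSolvable_ker {L' : Type*} [LieRing L'] [LieAlgebra F L']
    (f : L →ₗ⁅F⁆ L') [IsSolvable f.ker] (J : LieIdeal F L') [IsSolvable J] :
    IsSolvable (J.comap f) := by
  obtain ⟨k, hk⟩ := (isSolvable_iff F J).mp inferInstance
  obtain ⟨l, hl⟩ := (isSolvable_iff F f.ker).mp inferInstance
  rw [LieIdeal.derivedSeries_eq_bot_iff] at hk hl
  have hmap : ∀ m, (derivedSeriesOfIdeal F L m (J.comap f)).map f ≤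
      derivedSeriesOfIdeal F L' m J := fun m ↦ by
    induction m with
    | zero => exact LieIdeal.map_comap_le
    | succ m ih =>
      simp only [derivedSeriesOfIdeal_succ]
      exact (LieIdeal.map_bracket_le f).trans (LieSubmodule.mono_lie ih ih)
  have hker : derivedSeriesOfIdeal F L k (J.comap f) ≤ f.ker := by
    rw [← LieIdeal.map_eq_bot_iff, eq_bot_iff, ← hk]
    exact hmap k
  refine (isSolvable_iff F (J.comap f)).mpr ⟨l + k, ?_⟩
  rw [LieIdeal.derivedSeries_eq_bot_iff, derivedSeriesOfIdeal_add, eq_bot_iff, ← hl]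
  exact derivedSeriesOfIdeal_mono hker l

theorem lieQuotMk_surjective (I : LieIdeal F L) : Function.Surjective (lieQuotMk I) :=
  LieSubmodule.Quotient.surjective_mk' I

theorem ker_lieQuotMk (I : LieIdeal F L) : (lieQuotMk I).ker = I := by
  ext x
  exact LieSubmodule.Quotient.mk_eq_zero I

variable (F L) in
theorem hasTrivialRadical_quotient_radical [FiniteDimensional F L] :
    HasTrivialRadical F (L ⧸ radical F L) := by
  refine hasTrivialRadical_of_no_solvable_ideals fun J hJ ↦ ?_
  have : IsSolvable (lieQuotMk (radical F L)).ker := by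
    rw [ker_lieQuotMk]; infer_instance
  have hle := (LieIdeal.solvable_iff_le_radical F L _).mp
    (isSolvable_comap_of_isSolvable_ker (lieQuotMk (radical F L)) J)
  rw [eq_bot_iff]
  intro y hy
  obtain ⟨x, rfl⟩ := lieQuotMk_surjective _ y
  exact (LieSubmodule.Quotient.mk_eq_zero _).mpr (hle (LieIdeal.mem_comap.mpr hy))

variable (F L) in
theorem lie_top_top_eq_top_of_isSemisimple [IsSemisimple F L] :
    ⁅(⊤ : LieIdeal F L), (⊤ : LieIdeal F L)⁆ = ⊤ := by
  rw [← compl_eq_bot]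
  have hab : IsLieAbelian (⁅(⊤ : LieIdeal F L), (⊤ : LieIdeal F L)⁆ᶜ : LieIdeal F L) := by
    rw [LieSubmodule.lie_abelian_iff_lie_self_eq_bot, eq_bot_iff,
      ← inf_compl_eq_bot (a := ⁅(⊤ : LieIdeal F L), (⊤ : LieIdeal F L)⁆)]
    exact le_inf (LieSubmodule.mono_lie le_top le_top) (LieSubmodule.lie_le_right _ _)
  exact HasTrivialRadical.eq_bot_of_isSolvable _

variable (F L) in
theorem lie_top_top_sup_radical_eq_top [CharZero F] [FiniteDimensional F L] :
    ⁅(⊤ : LieIdeal F L), (⊤ : LieIdeal F L)⁆ ⊔ radical F L = ⊤ := by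
  have := hasTrivialRadical_quotient_radical F L
  have : FiniteDimensional F (L ⧸ radical F L) :=
    inferInstanceAs (FiniteDimensional F (L ⧸ (radical F L).toSubmodule))
  have hsurj := lieQuotMk_surjective (radical F L)
  have htop : (⊤ : LieIdeal F L).map (lieQuotMk (radical F L)) = ⊤ := by
    rw [← LieHom.idealRange_eq_map]
    exact LieHom.idealRange_eq_top_of_surjective _ hsurj
  have hbr := LieIdeal.map_bracket_eq (I₁ := ⊤) (I₂ := ⊤) (lieQuotMk (radical F L)) hsurj
  rw [htop, lie_top_top_eq_top_of_isSemisimple F (L ⧸ radical F L)] at hbr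
  have hcomap := LieIdeal.comap_map_eq (I := ⁅(⊤ : LieIdeal F L), (⊤ : LieIdeal F L)⁆)
    (congrArg SetLike.coe (LieIdeal.coe_map_of_surjective hsurj))
  rw [hbr, ker_lieQuotMk] at hcomap
  rw [← hcomap]
  exact top_le_iff.mp fun x _ ↦ LieIdeal.mem_comap.mpr trivial

/-- A perfect quotient of a Lie algebra which is spanned by two elements is trivial. -/
theorem eq_top_of_lie_top_top_sup_eq_top {N : LieIdeal F L}
    (hN : ⁅(⊤ : LieIdeal F L), (⊤ : LieIdeal F L)⁆ ⊔ N = ⊤) (a b : L)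
    (hab : ∀ z, ∃ r s : F, z - r • a - s • b ∈ N) : N = ⊤ := by
  have key : ∀ a b : L, (∀ z, ∃ r s : F, z - r • a - s • b ∈ N) →
      ∀ z, ∃ r : F, z - r • ⁅a, b⁆ ∈ N := by
    intro a b hab
    suffices N.toSubmodule ⊔ F ∙ ⁅a, b⁆ = ⊤ by
      intro z
      obtain ⟨n, hn, c, hc, rfl⟩ := Submodule.mem_sup.mp (this ▸ Submodule.mem_top (x := z))
      obtain ⟨r, rfl⟩ := Submodule.mem_span_singleton.mp hc
      exact ⟨r, by simpa using hn⟩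
    rw [eq_top_iff, ← LieSubmodule.top_toSubmodule (R := F) (L := L), ← hN,
      LieSubmodule.sup_toSubmodule, LieSubmodule.lieIdeal_oper_eq_linear_span']
    refine sup_le (Submodule.span_le.mpr ?_) le_sup_left
    rintro _ ⟨x, -, y, -, rfl⟩
    obtain ⟨r, s, hx⟩ := hab x
    obtain ⟨r', s', hy⟩ := hab y
    set n := x - r • a - s • b with hn
    set n' := y - r' • a - s' • b with hn'
    have hx' : x = n + (r • a + s • b) := by rw [hn]; abel
    have hy' : y = n' + (r' • a + s' • b) := by rw [hn']; abel
    have hba : ⁅b, a⁆ = -⁅a, b⁆ := (lie_skew b a).symm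
    refine Submodule.mem_sup.mpr ⟨⁅n, y⁆ + ⁅r • a + s • b, n'⁆,
      add_mem (lie_mem_left F L N n y hx) (N.lie_mem hy), (r * s' - s * r') • ⁅a, b⁆,
      Submodule.smul_mem _ _ (Submodule.mem_span_singleton_self _), ?_⟩
    have : ⁅r • a + s • b, r' • a + s' • b⁆ = (r * s' - s * r') • ⁅a, b⁆ := by
      simp only [lie_add, add_lie, lie_smul, smul_lie, lie_self, hba]
      module
    rw [← this, add_assoc, ← lie_add, ← hy', ← add_lie, ← hx']
  rw [eq_top_iff]
  intro z _
  obtain ⟨r, hr⟩ := key ⁅a, b⁆ ⁅a, b⁆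
    (fun z ↦ (key a b hab z).imp fun r hr ↦ ⟨0, by simpa using hr⟩) z
  simpa using hr

/-- If a subalgebra `C` is an ideal of `L` extended by one element, then over an algebraically
closed field `C` has codimension one in some subalgebra, unless `C = L`. -/
theorem exists_lieSubalgebra_eq_sup_span_singleton [IsAlgClosed F] [FiniteDimensional F L]
    {K : LieIdeal F L} {C : LieSubalgebra F L} {x : L}
    (hC : C.toSubmodule = K.toSubmodule ⊔ F ∙ x) (hne : C ≠ ⊤) :
    ∃ (D : LieSubalgebra F L) (y : L), y ∉ C ∧ D.toSubmodule = C.toSubmodule ⊔ F ∙ y := by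
  have hxC : x ∈ C := by
    rw [← LieSubalgebra.mem_toSubmodule, hC]
    exact Submodule.mem_sup_right (Submodule.mem_span_singleton_self x)
  have hKC : ∀ z ∈ K, z ∈ C := fun z hz ↦ by
    rw [← LieSubalgebra.mem_toSubmodule, hC]
    exact Submodule.mem_sup_left hz
  have : Nontrivial (L ⧸ C.toSubmodule) := Submodule.Quotient.nontrivial_iff.mpr
    fun h ↦ hne (LieSubalgebra.toSubmodule_injective h)
  obtain ⟨μ, hμ⟩ := Module.End.exists_eigenvalue (Submodule.mapQ C.toSubmodule C.toSubmodule
    (LieModule.toEnd F L L x) fun z hz ↦ C.lie_mem hxC hz)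
  obtain ⟨w, hw⟩ := hμ.exists_hasEigenvector
  obtain ⟨y, rfl⟩ := Submodule.Quotient.mk_surjective _ w
  have hyC : y ∉ C := fun h ↦ hw.2 ((Submodule.Quotient.mk_eq_zero _).mpr h)
  have hxy : ⁅x, y⁆ - μ • y ∈ C := by
    exact (Submodule.Quotient.eq C.toSubmodule).mp hw.apply_eq_smul
  have hCy : ∀ c ∈ C, ⁅c, y⁆ ∈ C.toSubmodule ⊔ F ∙ y := by
    intro c hc
    rw [← LieSubalgebra.mem_toSubmodule, hC] at hc
    obtain ⟨k, hk, _, hr, rfl⟩ := Submodule.mem_sup.mp hc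
    obtain ⟨r, rfl⟩ := Submodule.mem_span_singleton.mp hr
    refine Submodule.mem_sup.mpr ⟨⁅k, y⁆ + r • (⁅x, y⁆ - μ • y),
      add_mem (hKC _ (lie_mem_left F L K k y hk)) (C.smul_mem r hxy), r • μ • y,
      Submodule.smul_mem _ _ (Submodule.smul_mem _ _ (Submodule.mem_span_singleton_self y)), ?_⟩
    rw [add_lie, smul_lie, smul_sub]; abel
  refine ⟨{ C.toSubmodule ⊔ F ∙ y with lie_mem' := ?_ }, y, hyC, rfl⟩
  intro u v hu hv
  obtain ⟨c, hc, _, hr, rfl⟩ := Submodule.mem_sup.mp hu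
  obtain ⟨r, rfl⟩ := Submodule.mem_span_singleton.mp hr
  obtain ⟨c', hc', _, hs, rfl⟩ := Submodule.mem_sup.mp hv
  obtain ⟨s, rfl⟩ := Submodule.mem_span_singleton.mp hs
  have : ⁅c + r • y, c' + s • y⁆ = ⁅c, c'⁆ + (s • ⁅c, y⁆ - r • ⁅c', y⁆) := by
    simp only [lie_add, add_lie, lie_smul, smul_lie, lie_self, ← lie_skew c' y]
    module
  change ⁅c + r • y, c' + s • y⁆ ∈ C.toSubmodule ⊔ F ∙ y
  rw [this]
  exact add_mem (Submodule.mem_sup_left (C.lie_mem hc hc'))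
    (sub_mem (Submodule.smul_mem _ _ (hCy c hc)) (Submodule.smul_mem _ _ (hCy c' hc')))

theorem isSolvable_of_forall_exists_isMaxCompletion [IsAlgClosed F] [CharZero F]
    [FiniteDimensional F L]
    (h : ∀ M : LieSubalgebra F L, IsCoatom M → ∃ C : LieSubalgebra F L, IsMaxCompletion M C ∧
      Module.finrank F C - Module.finrank F (strictCore C) = 1) : IsSolvable L := by
  by_contra hL
  have hrad : radical F L ≠ ⊤ := fun htop ↦ hL <| by
    have : IsSolvable (⊤ : LieIdeal F L) := htop ▸ radicalIsSolvable F L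
    rwa [← solvable_iff_equiv_solvable LieSubalgebra.topEquiv (R := F)]
  obtain ⟨N, hN, hradN⟩ := (eq_top_or_exists_le_coatom (radical F L)).resolve_left hrad
  have hperf : ⁅(⊤ : LieIdeal F L), (⊤ : LieIdeal F L)⁆ ⊔ N = ⊤ :=
    top_le_iff.mp ((lie_top_top_sup_radical_eq_top F L).ge.trans (sup_le_sup_left hradN _))
  have hNtop : (N : LieSubalgebra F L) ≠ ⊤ := fun he ↦
    hN.1 (top_le_iff.mp fun x _ ↦ he.ge (LieSubalgebra.mem_top x))
  obtain ⟨M, hM, hNM⟩ := (eq_top_or_exists_le_coatom (N : LieSubalgebra F L)).resolve_left hNtop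
  have hle_N : ∀ I : LieIdeal F L, (I : LieSubalgebra F L) ≤ M → I ≤ N := by
    intro I hI
    by_contra hIN
    have htop : I ⊔ N = ⊤ := hN.2 _ (right_lt_sup.mpr hIN)
    refine hM.1 (top_le_iff.mp fun z _ ↦ ?_)
    obtain ⟨i, hi, n, hn, rfl⟩ := (LieSubmodule.mem_sup I N z).mp (htop ▸ LieSubmodule.mem_top z)
    exact add_mem (hI hi) (hNM hn)
  obtain ⟨C, ⟨hC, hmax⟩, hdim⟩ := h M hM
  have hkN : strictCore C ≤ N := hle_N _ hC.strictCore_le_left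
  obtain ⟨x, hxC, hxM⟩ := Set.not_subset.mp hC.1
  have hCx : C.toSubmodule = (strictCore C).toSubmodule ⊔ F ∙ x := by
    refine (Submodule.eq_of_le_of_finrank_le (sup_le (c := C.toSubmodule) (strictCore_le C)
      ((Submodule.span_singleton_le_iff_mem _ _).mpr hxC)) ?_).symm
    rw [Submodule.finrank_sup_span_singleton fun hx ↦ hxM (hC.strictCore_le_left hx)]
    change Module.finrank F C ≤ Module.finrank F (strictCore C) + 1
    omega
  have hCmem : ∀ z ∈ C, ∃ r : F, z - r • x ∈ N := by
    intro z hz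
    rw [← LieSubalgebra.mem_toSubmodule, hCx] at hz
    obtain ⟨k, hk, _, hr, rfl⟩ := Submodule.mem_sup.mp hz
    obtain ⟨r, rfl⟩ := Submodule.mem_span_singleton.mp hr
    exact ⟨r, by simpa using hkN hk⟩
  have hCtop : C ≠ ⊤ := by
    rintro rfl
    refine hN.1 (eq_top_of_lie_top_top_sup_eq_top hperf x x fun z ↦ ?_)
    exact (hCmem z (LieSubalgebra.mem_top z)).imp fun r hr ↦ ⟨0, by simpa using hr⟩
  obtain ⟨D, y, hyC, hD⟩ := exists_lieSubalgebra_eq_sup_span_singleton hCx hCtop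
  have hCD : C ≤ D := by
    rw [← LieSubalgebra.toSubmodule_le_toSubmodule, hD]
    exact le_sup_left
  have hyD : y ∈ D := by
    rw [← LieSubalgebra.mem_toSubmodule, hD]
    exact Submodule.mem_sup_right (Submodule.mem_span_singleton_self y)
  have hDnot : ¬ IsCompletion M D := fun hcomp ↦ hyC (hmax D hcomp hCD ▸ hyD)
  obtain ⟨I, hID, hIM⟩ : ∃ I : LieIdeal F L, (I : LieSubalgebra F L) < D ∧
      ¬ (I : LieSubalgebra F L) ≤ M := by
    by_contra! hcon
    exact hDnot ⟨fun hDM ↦ hC.1 (hCD.trans hDM), hcon⟩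
  have htop : I ⊔ N = ⊤ := hN.2 _ (right_lt_sup.mpr fun hIN ↦ hIM fun z hz ↦ hNM (hIN hz))
  refine hN.1 (eq_top_of_lie_top_top_sup_eq_top hperf x y fun z ↦ ?_)
  obtain ⟨i, hi, n, hn, rfl⟩ := (LieSubmodule.mem_sup I N z).mp (htop ▸ LieSubmodule.mem_top z)
  have hiD : i ∈ D.toSubmodule := hID.le hi
  rw [hD] at hiD
  obtain ⟨c, hc, _, hs, rfl⟩ := Submodule.mem_sup.mp hiD
  obtain ⟨s, rfl⟩ := Submodule.mem_span_singleton.mp hs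
  obtain ⟨r, hr⟩ := hCmem c hc
  refine ⟨r, s, ?_⟩
  convert add_mem hr hn using 1
  abel

end

/-- Let `L` be a finite-dimensional Lie algebra over an algebraically closed
field of characteristic zero. Then `L` is supersolvable if and only if every maximal
subalgebra `M` of `L` has a maximal completion `C` with `dim C - dim k(C) = 1`. -/
theorem statement15 {F L : Type*} [Field F] [IsAlgClosed F] [CharZero F] [LieRing L]
    [LieAlgebra F L] [FiniteDimensional F L] :
    IsSupersolvableLieAlgebra F L ↔
      ∀ M : LieSubalgebra F L, IsCoatom M →
        ∃ C : LieSubalgebra F L, IsMaxCompletion M C ∧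
          Module.finrank F C - Module.finrank F (strictCore C) = 1 := by
  refine ⟨fun h M hM ↦ h.exists_isMaxCompletion hM, fun h ↦ ?_⟩
  have := isSolvable_of_forall_exists_isMaxCompletion h
  exact isSupersolvableLieAlgebra_of_isSolvable
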